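/- Let K be a C-pseudo-cone in ℝⁿ. Then there is a constant c > 0, depending only on C, the fixed unit vector 𝔳 and K, such that for every nonempty compact set ω ⊂ Ω_{C°} the cone-volume measure satisfies V_K(ω) ≤ c / Δ(ω)^{n−1}. -/

import Mathlib

open MeasureTheory Set Filter
open scoped RealInnerProductSpace ENNReal Topology Pointwise NNReal

noncomputable section

abbrev En (n : ℕ) := EuclideanSpace ℝ (Fin n)

/-- `C` is a pointed closed convex cone with nonempty interior. -/
def IsGoodCone (n : ℕ) (C : Set (En n)) : Prop :=
  IsClosed C ∧ Convex ℝ C ∧ (∀ x ∈ C, ∀ r : ℝ, 0 ≤ r → r • x ∈ C) ∧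
    C ∩ (-C) = {0} ∧ (interior C).Nonempty

/-- The dual cone `C° = {x : ⟨x,y⟩ ≤ 0 ∀ y ∈ C}`. -/
def dualCone (n : ℕ) (C : Set (En n)) : Set (En n) := {x | ∀ y ∈ C, ⟪x, y⟫ ≤ 0}

/-- `Ω_C = S^{n-1} ∩ int C`. -/
def omegaC (n : ℕ) (C : Set (En n)) : Set (En n) := Metric.sphere 0 1 ∩ interior C

/-- `Ω_{C°} = S^{n-1} ∩ int C°`. -/
def omegaDual (n : ℕ) (C : Set (En n)) : Set (En n) :=
  Metric.sphere 0 1 ∩ interior (dualCone n C)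

/-- A pseudo-cone: nonempty closed convex set not containing `0` with `λK ⊆ K` for `λ ≥ 1`. -/
def IsPseudoCone (n : ℕ) (K : Set (En n)) : Prop :=
  K.Nonempty ∧ IsClosed K ∧ Convex ℝ K ∧ (0 : En n) ∉ K ∧ ∀ l : ℝ, 1 ≤ l → l • K ⊆ K

/-- The recession cone of `K`. -/
def recCone (n : ℕ) (K : Set (En n)) : Set (En n) :=
  {z | ∀ x ∈ K, ∀ t : ℝ, 0 ≤ t → x + t • z ∈ K}

/-- A `C`-pseudo-cone: a pseudo-cone with recession cone `C`. -/
def IsCPseudoCone (n : ℕ) (C K : Set (En n)) : Prop := IsPseudoCone n K ∧ recCone n K = C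

/-- The set of outer unit normal vectors of `K` at `x`. -/
def normalsAt (n : ℕ) (K : Set (En n)) (x : En n) : Set (En n) :=
  {u | ‖u‖ = 1 ∧ ∀ y ∈ K, ⟪y, u⟫ ≤ ⟪x, u⟫}

/-- `ν_K^{-1}(ω)`: the boundary points of `K` whose outer unit normal is unique and lies in `ω`. -/
def nuInv (n : ℕ) (K ω : Set (En n)) : Set (En n) :=
  {x | x ∈ frontier K ∧ ∃ u ∈ ω, normalsAt n K x = {u}}

open Classical in
/-- The outer unit normal map `ν_K` (junk value `0` where the normal is not unique). -/
def nuMap (n : ℕ) (K : Set (En n)) (x : En n) : En n :=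
  if h : ∃ u, normalsAt n K x = {u} then h.choose else 0

/-- `Δ(ω)`: the spherical (angular) distance of `ω` from the boundary of `Ω_{C°}`
(the relative boundary of `Ω_{C°}` in the unit sphere is `closure Ω_{C°} \ Ω_{C°}`,
since `Ω_{C°}` is relatively open in the sphere). -/
def sphereAngleDist (n : ℕ) (C ω : Set (En n)) : ℝ :=
  sInf {d | ∃ u ∈ ω, ∃ v ∈ closure (omegaDual n C) \ omegaDual n C,
    d = InnerProductGeometry.angle u v}

/-- `b(K)`: the distance of `K` from the origin. -/
def distOrigin (n : ℕ) (K : Set (En n)) : ℝ := Metric.infDist 0 K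

/-- `C^-(t) = C ∩ H^-(𝔳, t)`. -/
def Cminus (n : ℕ) (C : Set (En n)) (v : En n) (t : ℝ) : Set (En n) :=
  C ∩ {x | ⟪x, v⟫ ≤ t}

/-- The support function `h_K(u) = sup{⟨y,u⟩ : y ∈ K}`. -/
def suppFn (n : ℕ) (K : Set (En n)) (u : En n) : ℝ := sSup ((fun y => ⟪y, u⟫) '' K)

/-- `Θ : C∖{0} → (0,∞)` continuous and homogeneous of degree `-q`. -/
def IsThetaWeight (n : ℕ) (C : Set (En n)) (q : ℝ) (Θ : En n → ℝ) : Prop :=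
  ContinuousOn Θ (C \ {0}) ∧ (∀ y ∈ C \ {0}, 0 < Θ y) ∧
    ∀ y ∈ C \ {0}, ∀ r : ℝ, 0 < r → Θ (r • y) = r ^ (-q) * Θ y

/-- The `Θ`-weighted `n`-dimensional Hausdorff (Lebesgue) measure `H_Θ^n`. -/
def HTheta (n : ℕ) (Θ : En n → ℝ) : Measure (En n) :=
  volume.withDensity fun y => ENNReal.ofReal (Θ y)

/-- The `Θ`-weighted cone-volume measure `V_K^Θ(ω) = H_Θ^n(⋃_{x ∈ ν_K^{-1}(ω)} [0,x])`. -/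
def coneVol (n : ℕ) (Θ : En n → ℝ) (K ω : Set (En n)) : ℝ≥0∞ :=
  HTheta n Θ (⋃ x ∈ nuInv n K ω, segment ℝ (0 : En n) x)

/-- The (unweighted) cone-volume measure `V_K(ω) = H^n(⋃_{x ∈ ν_K^{-1}(ω)} [0,x])`. -/
def coneVolU (n : ℕ) (K ω : Set (En n)) : ℝ≥0∞ :=
  volume (⋃ x ∈ nuInv n K ω, segment ℝ (0 : En n) x)

/-- The `Θ`-weighted surface area measure `S_{n-1}^Θ(K,ω) = ∫_{ν_K^{-1}(ω)} Θ dH^{n-1}`. -/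
def surfTheta (n : ℕ) (Θ : En n → ℝ) (K ω : Set (En n)) : ℝ≥0∞ :=
  ∫⁻ x in nuInv n K ω, ENNReal.ofReal (Θ x) ∂(μH[(n : ℝ) - 1])

/-- `K ∈ K(C,ϖ)`: `K` is a `C`-pseudo-cone that is `C`-determined by `ϖ`. -/
def CDetermined (n : ℕ) (C ϖ K : Set (En n)) : Prop :=
  IsCPseudoCone n C K ∧ K = C ∩ ⋂ u ∈ ϖ, {x | ⟪x, u⟫ ≤ suppFn n K u}

/-- The Wulff shape `[g] = C ∩ ⋂_{u ∈ ϖ} {y : ⟨y,u⟩ ≤ -g(u)}`. -/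
def wulff (n : ℕ) (C ϖ : Set (En n)) (g : En n → ℝ) : Set (En n) :=
  C ∩ ⋂ u ∈ ϖ, {y | ⟪y, u⟫ ≤ -g u}

/-- The `Θ`-weighted covolume `V_Θ(K) = ∫_{C∖K} Θ dH^n`. -/
def covol (n : ℕ) (Θ : En n → ℝ) (C K : Set (En n)) : ℝ≥0∞ := HTheta n Θ (C \ K)

/-- The radial function `ρ_K(v) = min{λ : λv ∈ K}`. -/
def rho (n : ℕ) (K : Set (En n)) (v : En n) : ℝ := sInf {t : ℝ | t • v ∈ K}

/-- The radial map `r_K(v) = ρ_K(v) v`. -/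
def radMap (n : ℕ) (K : Set (En n)) (v : En n) : En n := rho n K v • v

/-- `α_K^{-1}(ω)`: directions `v ∈ Ω_C` with `r_K(v) ∈ ∂'K` (boundary point in `int C` with
unique outer normal) whose unique outer normal lies in `ω`. -/
def alphaInv (n : ℕ) (C K ω : Set (En n)) : Set (En n) :=
  {v ∈ omegaC n C | radMap n K v ∈ frontier K ∧ radMap n K v ∈ interior C ∧
    ∃ u ∈ ω, normalsAt n K (radMap n K v) = {u}}

/-- `μ` is the Borel measure on `Ω_{C°}` representing the `Θ`-weighted cone-volume
measure of `K` (extended by `0` outside `Ω_{C°}`). -/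
def RepsConeVol (n : ℕ) (C : Set (En n)) (Θ : En n → ℝ) (K : Set (En n))
    (μ : Measure (En n)) : Prop :=
  μ (omegaDual n C)ᶜ = 0 ∧
    ∀ ω, MeasurableSet ω → ω ⊆ omegaDual n C → μ ω = coneVol n Θ K ω

/-- `μ` is the Borel measure on `Ω_{C°}` representing the `Θ`-weighted surface area
measure of `K` (extended by `0` outside `Ω_{C°}`). -/
def RepsSurf (n : ℕ) (C : Set (En n)) (Θ : En n → ℝ) (K : Set (En n))
    (μ : Measure (En n)) : Prop :=
  μ (omegaDual n C)ᶜ = 0 ∧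
    ∀ ω, MeasurableSet ω → ω ⊆ omegaDual n C → μ ω = surfTheta n Θ K ω

/-!
Write `C` for the recession cone of `K` and `Δ` for the distance of `ω` from `∂Ω_{C°}`. For `u ∈ ω`
and `x ∈ C \ {0}`, a great circle arc from `u` to `x` leaves `C°` at a point whose angle with `x`
is at least `π / 2`, so `Δ ≤ ∠(u, x) - π / 2`, and Jordan's inequality gives
`Δ ‖x‖ ≤ -(π / 2) ⟨x, u⟩`.

Fix `y ∈ K` and let `x` be a point of `K` with outer normal `u ∈ ω`. Since `⟨y, u⟩ ≤ ⟨x, u⟩`, the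
estimate yields `‖x‖ ≤ π ‖y‖ / Δ =: R`; the constant `π` instead of `π / 2` makes `‖2y‖ ≤ R`.
The segment `[0, x]` does not meet `2y + C`, as `y + C ⊆ K` lies in the half-space
`⟨·, u⟩ ≤ ⟨x, u⟩` and `⟨y, u⟩ < 0`. So these segments only fill the part of `C ∩ B(0, R)` outside
`2y + C`, a layer of bounded thickness, and its volume is `O(R ^ (n - 1))`.
-/

section Topology

theorem inter_frontier_nonempty_of_isPreconnected {X : Type*} [TopologicalSpace X] {s t : Set X}
    (hs : IsPreconnected s) (hst : (s ∩ t).Nonempty) (hst' : (s ∩ tᶜ).Nonempty) :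
    (s ∩ frontier t).Nonempty := by
  by_contra hempty
  have mem_interior {x} (hx : x ∈ s) (hxt : x ∈ closure t) : x ∈ interior t :=
    by_contra fun h => hempty ⟨x, hx, hxt, h⟩
  obtain ⟨a, ha, hat⟩ := hst
  obtain ⟨b, hb, hbt⟩ := hst'
  obtain ⟨x, -, hx, hx'⟩ := hs (interior t) (closure t)ᶜ isOpen_interior
    isClosed_closure.isOpen_compl (fun x hx => (em (x ∈ closure t)).imp_left (mem_interior hx))
    ⟨a, ha, mem_interior ha (subset_closure hat)⟩
    ⟨b, hb, fun h => hbt (interior_subset (mem_interior hb h))⟩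
  exact hx' (interior_subset_closure hx)

end Topology

section Cone

variable {E : Type*} [NormedAddCommGroup E] [NormedSpace ℝ E] (D : PointedCone ℝ E)

theorem smul_coe_pointedCone {c : ℝ} (hc : 0 < c) : c • (D : Set E) = D := by
  ext x
  rw [mem_smul_set_iff_inv_smul_mem₀ hc.ne']
  exact D.smul_mem_iff (inv_pos.2 hc)

theorem smul_mem_interior_pointedCone_iff {c : ℝ} (hc : 0 < c) {x : E} :
    c • x ∈ interior (D : Set E) ↔ x ∈ interior (D : Set E) := by
  conv_lhs => rw [← smul_coe_pointedCone D hc, interior_smul₀ hc.ne']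
  exact smul_mem_smul_set_iff₀ hc.ne' _ _

theorem smul_mem_frontier_pointedCone_iff {c : ℝ} (hc : 0 < c) {x : E} :
    c • x ∈ frontier (D : Set E) ↔ x ∈ frontier (D : Set E) := by
  have hcl : c • x ∈ closure (D : Set E) ↔ x ∈ closure (D : Set E) := by
    conv_lhs => rw [← smul_coe_pointedCone D hc, closure_smul₀]
    exact smul_mem_smul_set_iff₀ hc.ne' _ _
  simp only [frontier, Set.mem_sdiff, hcl, smul_mem_interior_pointedCone_iff D hc]

theorem sphere_inter_closure_subset_closure_sphere_inter_interior
    (hD : (interior (D : Set E)).Nonempty) :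
    Metric.sphere 0 1 ∩ closure (D : Set E) ⊆ closure (Metric.sphere 0 1 ∩ interior D) := by
  rintro x ⟨hx1, hx⟩
  rw [mem_sphere_zero_iff_norm] at hx1
  have hx0 : x ≠ 0 := norm_ne_zero_iff.1 (hx1 ▸ one_ne_zero)
  rw [← D.convex.closure_interior_eq_closure_of_nonempty_interior hD] at hx
  have hx' : x ∈ closure ({0}ᶜ ∩ interior (D : Set E)) :=
    isOpen_compl_singleton.inter_closure ⟨hx0, hx⟩
  have hcont : ContinuousAt (fun z : E => ‖z‖⁻¹ • z) x :=
    (continuous_norm.continuousAt.inv₀ (norm_ne_zero_iff.2 hx0)).smul continuousAt_id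
  simpa [hx1] using hcont.continuousWithinAt.mem_closure hx'
    (t := Metric.sphere 0 1 ∩ interior (D : Set E)) fun z ⟨hz0, hz⟩ =>
      ⟨mem_sphere_zero_iff_norm.2 (norm_smul_inv_norm (𝕜 := ℝ) hz0),
        (smul_mem_interior_pointedCone_iff D (inv_pos.2 (norm_pos_iff.2 hz0))).2 hz⟩

theorem closure_sphere_inter_interior_sdiff (hD : (interior (D : Set E)).Nonempty) :
    closure (Metric.sphere 0 1 ∩ interior (D : Set E)) \ (Metric.sphere 0 1 ∩ interior D) =
      Metric.sphere 0 1 ∩ frontier D := by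
  apply Subset.antisymm
  · rintro x ⟨hx, hxD⟩
    have hx1 : x ∈ Metric.sphere 0 1 :=
      closure_minimal inter_subset_left Metric.isClosed_sphere hx
    exact ⟨hx1, closure_mono (inter_subset_right.trans interior_subset) hx,
      fun h => hxD ⟨hx1, h⟩⟩
  · rintro x ⟨hx1, hx, hxD⟩
    exact ⟨sphere_inter_closure_subset_closure_sphere_inter_interior D hD ⟨hx1, hx⟩,
      fun h => hxD h.2⟩

end Cone

section Angle

open InnerProductGeometry

variable {E : Type*} [NormedAddCommGroup E] [InnerProductSpace ℝ E]

theorem pi_div_two_le_angle_iff {x y : E} : Real.pi / 2 ≤ angle x y ↔ ⟪x, y⟫ ≤ 0 := by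
  rw [angle, ← not_lt, Real.arccos_lt_pi_div_two, not_lt]
  rcases eq_or_ne x 0 with rfl | hx
  · simp
  rcases eq_or_ne y 0 with rfl | hy
  · simp
  rw [div_le_iff₀ (by positivity), zero_mul]

/- The point is found on the segment from `u` to `x`, except when that segment passes through the
origin: then `angle u x = π`, and every nonzero vector lies on a geodesic from `u` to `x`. -/
theorem exists_mem_frontier_angle_eq_add (hE : 1 < Module.rank ℝ E) {D : Set E} {u x : E}
    (hu : u ∈ D) (hx : x ∉ D) (hu0 : u ≠ 0) (hx0 : x ≠ 0) :
    ∃ z ∈ frontier D, z ≠ 0 ∧ angle u x = angle u z + angle z x := by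
  obtain ⟨a, ha, haD⟩ := inter_frontier_nonempty_of_isPreconnected
    (convex_segment u x).isPreconnected ⟨u, left_mem_segment ℝ u x, hu⟩
    ⟨x, right_mem_segment ℝ u x, hx⟩
  rcases eq_or_ne a 0 with rfl | ha0
  · obtain ⟨z, hz0, hz⟩ := inter_frontier_nonempty_of_isPreconnected
      (isConnected_compl_singleton_of_one_lt_rank hE 0).isPreconnected ⟨u, hu0, hu⟩ ⟨x, hx0, hx⟩
    have hpi : EuclideanGeometry.angle u 0 x = Real.pi :=
      EuclideanGeometry.angle_eq_pi_iff_sbtw.2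
        ⟨mem_segment_iff_wbtw.1 ha, hu0.symm, hx0.symm⟩
    rw [EuclideanGeometry.angle, vsub_eq_sub, vsub_eq_sub, sub_zero, sub_zero] at hpi
    exact ⟨z, hz, hz0, (angle_eq_angle_add_angle_iff hz0).2 (.inl hpi)⟩
  · obtain ⟨r, s, hr, hs, -, rfl⟩ := ha
    exact ⟨_, haD, ha0, angle_eq_angle_add_add_angle_add_of_mem_span ha0
      (Submodule.mem_span_pair.2 ⟨⟨r, hr⟩, ⟨s, hs⟩, rfl⟩)⟩

theorem angle_sub_pi_div_two_mul_norm_le {u x : E} (hu : ‖u‖ = 1) (hux : ⟪u, x⟫ ≤ 0) :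
    (angle u x - Real.pi / 2) * ‖x‖ ≤ Real.pi / 2 * -⟪u, x⟫ := by
  have jordan : 2 / Real.pi * (angle u x - Real.pi / 2) ≤ -Real.cos (angle u x) := by
    rw [← Real.sin_sub_pi_div_two]
    exact Real.mul_le_sin (sub_nonneg.2 (pi_div_two_le_angle_iff.2 hux))
      (by linarith [angle_le_pi u x])
  have hinner : Real.cos (angle u x) * ‖x‖ = ⟪u, x⟫ := by
    simpa [hu] using cos_angle_mul_norm_mul_norm u x
  calc (angle u x - Real.pi / 2) * ‖x‖
      = Real.pi / 2 * (2 / Real.pi * (angle u x - Real.pi / 2)) * ‖x‖ := by field_simp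
    _ ≤ Real.pi / 2 * -Real.cos (angle u x) * ‖x‖ := by gcongr
    _ = Real.pi / 2 * -⟪u, x⟫ := by rw [← hinner]; ring

end Angle

section Volume

open Module (finrank)

variable {E : Type*} [NormedAddCommGroup E] [NormedSpace ℝ E] (C : PointedCone ℝ E)

theorem pointedCone_inter_closedBall_eq_smul {r : ℝ} (hr : 0 ≤ r) :
    (C : Set E) ∩ Metric.closedBall 0 r = r • ((C : Set E) ∩ Metric.closedBall 0 1) := by
  rcases hr.eq_or_lt with rfl | hr
  · have hne : ((C : Set E) ∩ Metric.closedBall 0 1).Nonempty :=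
      ⟨0, C.zero_mem, Metric.mem_closedBall_self zero_le_one⟩
    rw [zero_smul_set hne, Metric.closedBall_zero]
    exact inter_eq_right.2 (singleton_subset_iff.2 C.zero_mem)
  rw [smul_set_inter₀ hr.ne', smul_coe_pointedCone C hr, smul_unitClosedBall_of_nonneg hr.le]

variable [FiniteDimensional ℝ E] [MeasurableSpace E] (μ : Measure E) [μ.IsAddHaarMeasure]

theorem addHaar_pointedCone_inter_closedBall_ne_top (r : ℝ) :
    μ ((C : Set E) ∩ Metric.closedBall 0 r) ≠ ∞ :=
  (measure_lt_top_of_subset inter_subset_right measure_closedBall_lt_top.ne).ne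

variable [BorelSpace E]

theorem addHaar_pointedCone_inter_closedBall {r : ℝ} (hr : 0 ≤ r) :
    μ ((C : Set E) ∩ Metric.closedBall 0 r) =
      ENNReal.ofReal (r ^ finrank ℝ E) * μ ((C : Set E) ∩ Metric.closedBall 0 1) := by
  rw [pointedCone_inter_closedBall_eq_smul C hr, Measure.addHaar_smul,
    abs_of_nonneg (by positivity)]

/- The translate of the part of `C` in the ball of radius `R - ‖y‖` stays inside the part of `C` in
the ball of radius `R`, so at most the difference of the two volumes can be left uncovered. -/
theorem addHaar_pointedCone_inter_closedBall_sdiff_vadd_le {y : E} (hy : y ∈ C) {R : ℝ}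
    (hyR : ‖y‖ ≤ R) :
    μ (((C : Set E) ∩ Metric.closedBall 0 R) \ (y +ᵥ (C : Set E))) ≤
      ENNReal.ofReal (‖y‖ * finrank ℝ E * R ^ (finrank ℝ E - 1)) *
        μ ((C : Set E) ∩ Metric.closedBall 0 1) := by
  have hR : 0 ≤ R := (norm_nonneg y).trans hyR
  set T : Set E := y +ᵥ ((C : Set E) ∩ Metric.closedBall 0 (R - ‖y‖))
  have hTC : T ⊆ (C : Set E) ∩ Metric.closedBall 0 R := by
    rintro _ ⟨z, ⟨hzC, hz⟩, rfl⟩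
    rw [mem_closedBall_zero_iff] at hz
    exact ⟨C.add_mem hy hzC,
      mem_closedBall_zero_iff.2 ((norm_add_le y z).trans (by linarith))⟩
  have hμT : μ T = μ ((C : Set E) ∩ Metric.closedBall 0 (R - ‖y‖)) := measure_vadd _ _ _
  have hT : NullMeasurableSet T μ :=
    ((C.convex.inter (convex_closedBall 0 _)).vadd y).nullMeasurableSet μ
  have hpow : R ^ finrank ℝ E - (R - ‖y‖) ^ finrank ℝ E ≤
      ‖y‖ * finrank ℝ E * R ^ (finrank ℝ E - 1) := by
    have h := (le_abs_self _).trans (abs_pow_sub_pow_le R (R - ‖y‖) (finrank ℝ E))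
    rwa [sub_sub_cancel, abs_norm, abs_of_nonneg hR, abs_of_nonneg (sub_nonneg.2 hyR),
      max_eq_left (sub_le_self R (norm_nonneg y))] at h
  calc μ (((C : Set E) ∩ Metric.closedBall 0 R) \ (y +ᵥ (C : Set E)))
      ≤ μ (((C : Set E) ∩ Metric.closedBall 0 R) \ T) :=
        measure_mono (sdiff_subset_sdiff_right (vadd_set_mono inter_subset_left))
    _ = μ ((C : Set E) ∩ Metric.closedBall 0 R) -
          μ ((C : Set E) ∩ Metric.closedBall 0 (R - ‖y‖)) := by
        rw [measure_sdiff hTC hT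
          (hμT ▸ addHaar_pointedCone_inter_closedBall_ne_top C μ _), hμT]
    _ = ENNReal.ofReal (R ^ finrank ℝ E - (R - ‖y‖) ^ finrank ℝ E) *
          μ ((C : Set E) ∩ Metric.closedBall 0 1) := by
        rw [addHaar_pointedCone_inter_closedBall C μ hR,
          addHaar_pointedCone_inter_closedBall C μ (sub_nonneg.2 hyR),
          ENNReal.ofReal_sub _ (pow_nonneg (sub_nonneg.2 hyR) _),
          ENNReal.sub_mul fun _ _ => addHaar_pointedCone_inter_closedBall_ne_top C μ 1]
    _ ≤ _ := by gcongr

end Volume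

section DualCone

open InnerProductGeometry

variable {n : ℕ} {C ω : Set (En n)} {u x z : En n}

theorem dualCone_eq_innerDual_neg (n : ℕ) (C : Set (En n)) :
    dualCone n C = (ProperCone.innerDual (-C)).toPointedCone := by
  ext x
  simp only [dualCone, mem_ofPred_eq, SetLike.mem_coe, ProperCone.mem_toPointedCone,
    ProperCone.mem_innerDual, Set.mem_neg]
  exact ⟨fun h y hy => by simpa [real_inner_comm] using h _ hy,
    fun h y hy => by simpa [real_inner_comm] using h (x := -y) (by simpa using hy)⟩

theorem isClosed_dualCone (n : ℕ) (C : Set (En n)) : IsClosed (dualCone n C) :=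
  dualCone_eq_innerDual_neg n C ▸ (ProperCone.innerDual (-C)).isClosed

theorem closure_omegaDual_sdiff_omegaDual (hC : (interior (dualCone n C)).Nonempty) :
    closure (omegaDual n C) \ omegaDual n C = Metric.sphere 0 1 ∩ frontier (dualCone n C) := by
  rw [omegaDual]
  rw [dualCone_eq_innerDual_neg] at hC ⊢
  exact closure_sphere_inter_interior_sdiff _ hC

theorem notMem_dualCone_of_mem (hx : x ∈ C) (hx0 : x ≠ 0) : x ∉ dualCone n C :=
  fun h => (real_inner_self_pos.2 hx0).not_ge (h x hx)

theorem exists_mem_frontier_dualCone_angle_le (hn : 2 ≤ n) (hu : u ∈ dualCone n C) (hu0 : u ≠ 0)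
    (hx : x ∈ C) (hx0 : x ≠ 0) :
    ∃ z ∈ frontier (dualCone n C), z ≠ 0 ∧ angle u z ≤ angle u x - Real.pi / 2 := by
  have hrank : 1 < Module.rank ℝ (En n) := by
    rw [← Module.finrank_eq_rank, finrank_euclideanSpace_fin]
    exact_mod_cast hn
  obtain ⟨z, hz, hz0, hadd⟩ := exists_mem_frontier_angle_eq_add hrank hu
    (notMem_dualCone_of_mem hx hx0) hu0 hx0
  have hzx := pi_div_two_le_angle_iff.2 ((isClosed_dualCone n C).frontier_subset hz x hx)
  exact ⟨z, hz, hz0, by linarith⟩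

theorem normalize_mem_closure_omegaDual_sdiff (hC : (interior (dualCone n C)).Nonempty)
    (hz : z ∈ frontier (dualCone n C)) (hz0 : z ≠ 0) :
    NormedSpace.normalize z ∈ closure (omegaDual n C) \ omegaDual n C := by
  rw [closure_omegaDual_sdiff_omegaDual hC]
  refine ⟨mem_sphere_zero_iff_norm.2 (NormedSpace.norm_normalize_eq_one_iff.2 hz0), ?_⟩
  rw [dualCone_eq_innerDual_neg] at hz ⊢
  exact (smul_mem_frontier_pointedCone_iff _ (inv_pos.2 (norm_pos_iff.2 hz0))).2 hz

theorem sphereAngleDist_le_angle (hu : u ∈ ω) (hz : z ∈ closure (omegaDual n C) \ omegaDual n C) :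
    sphereAngleDist n C ω ≤ angle u z :=
  csInf_le ⟨0, by rintro _ ⟨u, -, z, -, rfl⟩; exact angle_nonneg u z⟩ ⟨u, hu, z, hz, rfl⟩

theorem sphereAngleDist_le_angle_sub_pi_div_two (hn : 2 ≤ n) (hω : ω ⊆ omegaDual n C) (hu : u ∈ ω)
    (hx : x ∈ C) (hx0 : x ≠ 0) : sphereAngleDist n C ω ≤ angle u x - Real.pi / 2 := by
  obtain ⟨hu1, huC⟩ := hω hu
  obtain ⟨z, hz, hz0, hle⟩ := exists_mem_frontier_dualCone_angle_le hn (interior_subset huC)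
    (Metric.ne_of_mem_sphere hu1 one_ne_zero) hx hx0
  refine le_trans ?_ hle
  rw [← angle_normalize_right]
  exact sphereAngleDist_le_angle hu (normalize_mem_closure_omegaDual_sdiff ⟨u, huC⟩ hz hz0)

theorem sphereAngleDist_le_pi_div_two (hn : 2 ≤ n) (hω : ω ⊆ omegaDual n C) (hx : x ∈ C)
    (hx0 : x ≠ 0) : sphereAngleDist n C ω ≤ Real.pi / 2 := by
  rcases ω.eq_empty_or_nonempty with rfl | ⟨u, hu⟩
  · simpa [sphereAngleDist] using Real.pi_div_two_pos.le
  · linarith [sphereAngleDist_le_angle_sub_pi_div_two hn hω hu hx hx0, angle_le_pi u x]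

theorem sphereAngleDist_mul_norm_le (hn : 2 ≤ n) (hω : ω ⊆ omegaDual n C) (hu : u ∈ ω)
    (hx : x ∈ C) : sphereAngleDist n C ω * ‖x‖ ≤ Real.pi / 2 * -⟪x, u⟫ := by
  rcases eq_or_ne x 0 with rfl | hx0
  · simp
  calc sphereAngleDist n C ω * ‖x‖ ≤ (angle u x - Real.pi / 2) * ‖x‖ := by
        gcongr
        exact sphereAngleDist_le_angle_sub_pi_div_two hn hω hu hx hx0
    _ ≤ Real.pi / 2 * -⟪x, u⟫ := by
        rw [real_inner_comm]
        exact angle_sub_pi_div_two_mul_norm_le (mem_sphere_zero_iff_norm.1 (hω hu).1)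
          (interior_subset (hω hu).2 x hx)

theorem angle_pos_of_mem_omegaDual (hu : u ∈ omegaDual n C)
    (hz : z ∈ Metric.sphere 0 1 ∩ frontier (dualCone n C)) : 0 < angle u z := by
  refine (angle_nonneg u z).lt_of_ne' fun h => hz.2.2 ?_
  obtain ⟨-, r, hr, rfl⟩ := angle_eq_zero_iff.1 h
  have hint := hu.2
  rw [dualCone_eq_innerDual_neg] at hint ⊢
  exact (smul_mem_interior_pointedCone_iff _ hr).2 hint

theorem sphereAngleDist_pos (hn : 2 ≤ n) (hω : ω ⊆ omegaDual n C) (hωc : IsCompact ω)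
    (hω0 : ω.Nonempty) (hx : x ∈ C) (hx0 : x ≠ 0) : 0 < sphereAngleDist n C ω := by
  have ⟨u, hu⟩ := hω0
  obtain ⟨hu1, huC⟩ := hω hu
  set B := Metric.sphere (0 : En n) 1 ∩ frontier (dualCone n C)
  have hBeq : closure (omegaDual n C) \ omegaDual n C = B :=
    closure_omegaDual_sdiff_omegaDual ⟨u, huC⟩
  obtain ⟨z, hz, hz0, -⟩ := exists_mem_frontier_dualCone_angle_le hn (interior_subset huC)
    (Metric.ne_of_mem_sphere hu1 one_ne_zero) hx hx0
  have hB : B.Nonempty := ⟨_, hBeq ▸ normalize_mem_closure_omegaDual_sdiff ⟨u, huC⟩ hz hz0⟩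
  have hBc : IsCompact B := (isCompact_sphere 0 1).inter_right isClosed_frontier
  have hcont : ContinuousOn (fun p : En n × En n => angle p.1 p.2) (ω ×ˢ B) := fun p hp =>
    (continuousAt_angle (Metric.ne_of_mem_sphere (hω hp.1).1 one_ne_zero)
      (Metric.ne_of_mem_sphere hp.2.1 one_ne_zero)).continuousWithinAt
  have himage : {d | ∃ u ∈ ω, ∃ v ∈ closure (omegaDual n C) \ omegaDual n C, d = angle u v} =
      (fun p : En n × En n => angle p.1 p.2) '' (ω ×ˢ B) := by
    ext d
    simp [hBeq, eq_comm]
  rw [sphereAngleDist, himage]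
  obtain ⟨p, hp, hmin⟩ :=
    ((hωc.prod hBc).image_of_continuousOn hcont).sInf_mem ((hω0.prod hB).image _)
  exact hmin ▸ angle_pos_of_mem_omegaDual (hω hp.1) hp.2

end DualCone

section PseudoCone

variable {n : ℕ} {K ω : Set (En n)} {u x y : En n}

/-- The recession cone `recCone n K`, bundled as a pointed cone. -/
def recPointedCone (n : ℕ) (K : Set (En n)) : PointedCone ℝ (En n) where
  carrier := recCone n K
  add_mem' hz hw x hx t ht := by
    rw [smul_add, ← add_assoc]
    exact hw _ (hz x hx t ht) t ht
  zero_mem' x hx t _ := by simpa using hx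
  smul_mem' c z hz x hx t ht := by
    have hzc := hz x hx (t * c) (mul_nonneg ht c.2)
    rwa [mul_smul] at hzc

theorem IsPseudoCone.subset_recCone (hK : IsPseudoCone n K) : K ⊆ recCone n K := by
  obtain ⟨-, hclosed, hconv, -, hsmul⟩ := hK
  intro x hx y hy t ht
  have hasymp : x ∈ asymptoticCone ℝ K := by
    have hfreq : ∃ᶠ t : ℝ in atTop, t • x ∈ K :=
      ((eventually_ge_atTop 1).mono fun t ht => hsmul t ht (smul_mem_smul_set hx)).frequently
    exact (tendsto_id.atTop_smul_const_tendsto_asymptoticNhds x).frequently hfreq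
  rw [add_comm]
  exact hconv.smul_vadd_mem_of_isClosed_of_mem_asymptoticCone hclosed ht hasymp hy

theorem disjoint_segment_vadd_recCone (hu : u ∈ normalsAt n K x) (hxu : ⟪x, u⟫ ≤ 0) (hy : y ∈ K)
    (hyu : ⟪y, u⟫ < 0) : Disjoint (segment ℝ 0 x) ((2 : ℝ) • y +ᵥ recCone n K) := by
  rw [segment_eq_image', Set.disjoint_left]
  rintro _ ⟨t, ⟨-, ht⟩, rfl⟩ ⟨z, hz, htz⟩
  have htx : ⟪y + z, u⟫ + ⟪y, u⟫ = t * ⟪x, u⟫ := by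
    rw [← real_inner_smul_left, ← inner_add_left]
    congr 1
    simp only [vadd_eq_add, zero_add, sub_zero] at htz
    rw [← htz]
    module
  have hyz : ⟪y + z, u⟫ ≤ ⟪x, u⟫ := hu.2 _ (by simpa using hz y hy 1 zero_le_one)
  have hle : ⟪x, u⟫ ≤ t * ⟪x, u⟫ := le_mul_of_le_one_left hxu ht
  linarith

theorem norm_le_of_mem_normalsAt (hn : 2 ≤ n) (hK : IsPseudoCone n K)
    (hω : ω ⊆ omegaDual n (recCone n K)) (hΔ : 0 < sphereAngleDist n (recCone n K) ω)
    (hy : y ∈ K) (hx : x ∈ K) (hu : u ∈ ω) (hux : u ∈ normalsAt n K x) :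
    ‖x‖ ≤ Real.pi * ‖y‖ / sphereAngleDist n (recCone n K) ω := by
  rw [le_div_iff₀ hΔ, mul_comm]
  have hy' : -⟪x, u⟫ ≤ ‖y‖ := by
    have hcs := neg_le_of_abs_le (abs_real_inner_le_norm y u)
    rw [hux.1, mul_one] at hcs
    linarith [hux.2 y hy]
  have := sphereAngleDist_mul_norm_le hn hω hu (hK.subset_recCone hx)
  nlinarith [Real.pi_pos, norm_nonneg y]

theorem iUnion_segment_subset (hn : 2 ≤ n) (hK : IsPseudoCone n K)
    (hω : ω ⊆ omegaDual n (recCone n K)) (hΔ : 0 < sphereAngleDist n (recCone n K) ω)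
    (hy : y ∈ K) :
    ⋃ x ∈ nuInv n K ω, segment ℝ 0 x ⊆
      (recCone n K ∩ Metric.closedBall 0 (Real.pi * ‖y‖ / sphereAngleDist n (recCone n K) ω)) \
        ((2 : ℝ) • y +ᵥ recCone n K) := by
  refine iUnion₂_subset fun x hx => ?_
  obtain ⟨hxf, u, hu, hux⟩ := hx
  have hux : u ∈ normalsAt n K x := hux ▸ mem_singleton u
  have hxK : x ∈ K := hK.2.1.frontier_subset hxf
  have hxC : x ∈ recCone n K := hK.subset_recCone hxK
  have hxu : ⟪x, u⟫ ≤ 0 := real_inner_comm x u ▸ interior_subset (hω hu).2 x hxC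
  have hy0 : 0 < ‖y‖ := norm_pos_iff.2 fun h => hK.2.2.2.1 (h ▸ hy)
  have hyu : ⟪y, u⟫ < 0 := by
    have := sphereAngleDist_mul_norm_le hn hω hu (hK.subset_recCone hy)
    nlinarith [mul_pos hΔ hy0, Real.pi_pos]
  have hxR := norm_le_of_mem_normalsAt hn hK hω hΔ hy hxK hu hux
  refine subset_sdiff.2 ⟨subset_inter ?_ ?_, disjoint_segment_vadd_recCone hux hxu hy hyu⟩
  · exact (recPointedCone n K).convex.segment_subset (recPointedCone n K).zero_mem hxC
  · exact (convex_closedBall _ _).segment_subset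
      (Metric.mem_closedBall_self ((norm_nonneg x).trans hxR)) (mem_closedBall_zero_iff.2 hxR)

theorem coneVolU_le (hn : 2 ≤ n) (hK : IsPseudoCone n K) (hω : ω ⊆ omegaDual n (recCone n K))
    (hΔ : 0 < sphereAngleDist n (recCone n K) ω) (hy : y ∈ K) :
    coneVolU n K ω ≤
      ENNReal.ofReal (2 * ‖y‖ * n * (Real.pi * ‖y‖ / sphereAngleDist n (recCone n K) ω) ^ (n - 1)) *
        volume (recCone n K ∩ Metric.closedBall 0 1) := by
  set Δ := sphereAngleDist n (recCone n K) ω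
  have hyC := hK.subset_recCone hy
  have hy0 : y ≠ 0 := fun h => hK.2.2.2.1 (h ▸ hy)
  have h2y : ‖(2 : ℝ) • y‖ = 2 * ‖y‖ := by simp [norm_smul]
  have h2yR : ‖(2 : ℝ) • y‖ ≤ Real.pi * ‖y‖ / Δ := by
    have hΔ_le : Δ ≤ Real.pi / 2 := sphereAngleDist_le_pi_div_two hn hω hyC hy0
    rw [h2y, le_div_iff₀ hΔ]
    nlinarith [norm_nonneg y]
  calc coneVolU n K ω
      ≤ volume ((recCone n K ∩ Metric.closedBall 0 (Real.pi * ‖y‖ / Δ)) \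
          ((2 : ℝ) • y +ᵥ recCone n K)) := measure_mono (iUnion_segment_subset hn hK hω hΔ hy)
    _ ≤ ENNReal.ofReal (‖(2 : ℝ) • y‖ * n * (Real.pi * ‖y‖ / Δ) ^ (n - 1)) *
          volume (recCone n K ∩ Metric.closedBall 0 1) := by
        have hbound := addHaar_pointedCone_inter_closedBall_sdiff_vadd_le (recPointedCone n K)
          volume ((recPointedCone n K).smul_mem (zero_le_two (α := ℝ)) hyC) h2yR
        rwa [finrank_euclideanSpace_fin] at hbound
    _ = _ := by rw [h2y]

end PseudoCone

theorem statement0_general (n : ℕ) (hn : 2 ≤ n) (C K : Set (En n)) (hK : IsCPseudoCone n C K) :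
    ∃ c : ℝ, 0 < c ∧ ∀ ω ⊆ omegaDual n C, 0 < sphereAngleDist n C ω →
      coneVolU n K ω ≤ ENNReal.ofReal (c / sphereAngleDist n C ω ^ (n - 1)) := by
  obtain ⟨hK, rfl⟩ := hK
  obtain ⟨y, hy⟩ := hK.1
  have hy0 : 0 < ‖y‖ := norm_pos_iff.2 fun h => hK.2.2.2.1 (h ▸ hy)
  have hB_top : volume (Metric.closedBall (0 : En n) 1) ≠ ∞ := measure_closedBall_lt_top.ne
  set β := (volume (Metric.closedBall (0 : En n) 1)).toReal
  have hβ : 0 < β :=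
    ENNReal.toReal_pos (Metric.measure_closedBall_pos volume 0 one_pos).ne' hB_top
  refine ⟨2 * ‖y‖ * n * (Real.pi * ‖y‖) ^ (n - 1) * β, by positivity, fun ω hω hΔ => ?_⟩
  set Δ := sphereAngleDist n (recCone n K) ω
  calc coneVolU n K ω
      ≤ ENNReal.ofReal (2 * ‖y‖ * n * (Real.pi * ‖y‖ / Δ) ^ (n - 1)) *
          volume (recCone n K ∩ Metric.closedBall 0 1) := coneVolU_le hn hK hω hΔ hy
    _ ≤ ENNReal.ofReal (2 * ‖y‖ * n * (Real.pi * ‖y‖ / Δ) ^ (n - 1)) * ENNReal.ofReal β := by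
        rw [ENNReal.ofReal_toReal hB_top]
        gcongr
        exact inter_subset_right
    _ = ENNReal.ofReal (2 * ‖y‖ * n * (Real.pi * ‖y‖) ^ (n - 1) * β / Δ ^ (n - 1)) := by
        rw [← ENNReal.ofReal_mul (by positivity), div_pow]
        congr 1
        ring

/-- For a `C`-pseudo-cone `K`, there is a constant `c > 0` (depending only
on `C`, `𝔳` and `K`) such that `V_K(ω) ≤ c / Δ(ω)^{n-1}` for every nonempty compact
`ω ⊆ Ω_{C°}`. -/
theorem statement0 (n : ℕ) (hn : 2 ≤ n) (C : Set (En n)) (hC : IsGoodCone n C)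
    (v : En n) (hv1 : ‖v‖ = 1) (hv2 : v ∈ interior C) (hv3 : -v ∈ interior (dualCone n C))
    (K : Set (En n)) (hK : IsCPseudoCone n C K) :
    ∃ c : ℝ, 0 < c ∧ ∀ ω : Set (En n), ω.Nonempty → IsCompact ω → ω ⊆ omegaDual n C →
      coneVolU n K ω ≤ ENNReal.ofReal (c / sphereAngleDist n C ω ^ (n - 1)) := by
  obtain ⟨y, hy⟩ := hK.1.1
  have hyC : y ∈ C := hK.2 ▸ hK.1.subset_recCone hy
  have hy0 : y ≠ 0 := fun h => hK.1.2.2.2.1 (h ▸ hy)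
  obtain ⟨c, hc, hle⟩ := statement0_general n hn C K hK
  exact ⟨c, hc, fun ω hω0 hωc hω => hle ω hω (sphereAngleDist_pos hn hω hωc hω0 hyC hy0)⟩
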